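/- Let ε ∈ ℝ^n and β ∈ ℝ^p be fixed, let K̃ ⊆ ℝ^{n×p} be a compact convex set, and let h: ℝ^p → ℝ be a norm. For M ∈ ℝ^{n×p} and b ∈ ℝ^p set L(M, b) = ‖ε + Mβ − Mb‖₂²/(2n). Then there exists a finite constant C(K̃, h, ε, β), depending only on (K̃, h, ε, β), such that for all X, X̃ ∈ K̃ and any minimizers β̂ ∈ argmin_{b∈ℝ^p}{L(X, b) + h(b)} and β̃ ∈ argmin_{b∈ℝ^p}{L(X̃, b) + h(b)}: ‖X(β̂ − β̃)‖₂² + ‖X̃(β̂ − β̃)‖₂² ≤ C(K̃, h, ε, β)·‖X − X̃‖_op·‖β̂ − β̃‖₂. -/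

import Mathlib

/-!
Let `d = β̂ - β̃` and `w = β̂ + β̃ - 2β`. The least-squares loss is quadratic, so a minimizer of
loss plus convex penalty has quadratic growth (`quadratic_growth`). Adding the growth inequality of
`β̂` against `β̃` for the design `X` to that of `β̃` against `β̂` for `X̃` cancels the penalty and
bounds `‖Xd‖² + ‖X̃d‖²` by
`2⟨(X - X̃)d, ε⟩ - ⟨(X - X̃)d, Xw⟩ - ⟨X̃d, (X - X̃)w⟩` (`cross_term_eq`).
By Cauchy-Schwarz each term is at most `‖X - X̃‖_op ‖d‖` times a factor controlled by `‖ε‖`, a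
uniform bound on the designs in the compact set, and `‖w‖`. Finally `‖w‖` is bounded since
`h β̂` and `h β̃` are at most the objective at `0`, and `h` dominates a multiple of the Euclidean
norm (`IsNorm.exists_l2_le`).
-/

open MeasureTheory ProbabilityTheory Filter
open scoped ENNReal NNReal

noncomputable section

namespace BZ

/-- Euclidean (ℓ2) norm of a finite real vector. -/
def l2 {m : ℕ} (v : Fin m → ℝ) : ℝ := Real.sqrt (∑ i, (v i) ^ 2)

/-- ℓ1 norm. -/
def l1 {m : ℕ} (v : Fin m → ℝ) : ℝ := ∑ i, |v i|

/-- Euclidean inner product. -/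
def dot {m : ℕ} (a b : Fin m → ℝ) : ℝ := ∑ i, a i * b i

/-- Support of a vector, as a finset. -/
def suppF {m : ℕ} (v : Fin m → ℝ) : Finset (Fin m) := Finset.univ.filter fun i => v i ≠ 0

/-- ℓ0 "norm": number of nonzero coordinates. -/
def l0 {m : ℕ} (v : Fin m → ℝ) : ℕ := (suppF v).card

/-- ℓ∞ norm. -/
def linf {m : ℕ} (v : Fin m → ℝ) : ℝ := sSup (Set.range fun i => |v i|)

/-- Sign function. -/
def sgn (x : ℝ) : ℝ := if 0 < x then 1 else if x < 0 then -1 else 0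

/-- Matrix (given as a function) times a vector. -/
def mulVec' {n p : ℕ} (X : Fin n → Fin p → ℝ) (b : Fin p → ℝ) : Fin n → ℝ :=
  fun i => ∑ j, X i j * b j

/-- Transposed matrix times a vector: `Xᵀ r`. -/
def tmulVec {n p : ℕ} (X : Fin n → Fin p → ℝ) (r : Fin n → ℝ) : Fin p → ℝ :=
  fun j => ∑ i, X i j * r i

/-- Gram matrix `XᵀX`. -/
def gramOf {n p : ℕ} (X : Fin n → Fin p → ℝ) : Matrix (Fin p) (Fin p) ℝ :=
  Matrix.of fun j k => ∑ i, X i j * X i k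

/-- The Lasso objective `‖y - Xb‖₂²/(2n) + λ‖b‖₁`. -/
def lassoObj {n p : ℕ} (y : Fin n → ℝ) (X : Fin n → Fin p → ℝ) (lam : ℝ) (b : Fin p → ℝ) : ℝ :=
  (l2 (fun i => y i - mulVec' X b i)) ^ 2 / (2 * n) + lam * l1 b

/-- `bhat` is a Lasso solution. -/
def IsLasso {n p : ℕ} (y : Fin n → ℝ) (X : Fin n → Fin p → ℝ) (lam : ℝ) (bhat : Fin p → ℝ) :
    Prop :=
  ∀ b : Fin p → ℝ, lassoObj y X lam bhat ≤ lassoObj y X lam b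

/-- Quadratic form `vᵀ M v`. -/
def quadForm {m : ℕ} (M : Matrix (Fin m) (Fin m) ℝ) (v : Fin m → ℝ) : ℝ :=
  ∑ i, ∑ j, v i * M i j * v j

/-- Principal submatrix `M_{A,A}` indexed by a finset `A`. -/
def subMat {m : ℕ} (M : Matrix (Fin m) (Fin m) ℝ) (A : Finset (Fin m)) :
    Matrix {x // x ∈ A} {x // x ∈ A} ℝ := Matrix.of fun i j => M i.1 j.1

/-- Bilinear form `(u_A)ᵀ (M_{A,A})⁻¹ v_A`. -/
def subBilinInv {m : ℕ} (M : Matrix (Fin m) (Fin m) ℝ) (A : Finset (Fin m)) (u v : Fin m → ℝ) :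
    ℝ :=
  ∑ i : {x // x ∈ A}, ∑ j : {x // x ∈ A}, u i.1 * (subMat M A)⁻¹ i j * v j.1

/-- Smallest eigenvalue of `M_{A,A}` (Rayleigh quotient formulation). -/
def rayleighMin {m : ℕ} (M : Matrix (Fin m) (Fin m) ℝ) (A : Finset (Fin m)) : ℝ :=
  sInf {c | ∃ v : Fin m → ℝ, (∀ j ∉ A, v j = 0) ∧ l2 v = 1 ∧ c = quadForm M v}

/-- Largest eigenvalue of `M_{A,A}` (Rayleigh quotient formulation). -/
def rayleighMax {m : ℕ} (M : Matrix (Fin m) (Fin m) ℝ) (A : Finset (Fin m)) : ℝ :=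
  sSup {c | ∃ v : Fin m → ℝ, (∀ j ∉ A, v j = 0) ∧ l2 v = 1 ∧ c = quadForm M v}

/-- Sparse minimal eigenvalue `φ_min(m, B; M)`. -/
def phiMin {m : ℕ} (mm : ℕ) (B : Finset (Fin m)) (M : Matrix (Fin m) (Fin m) ℝ) : ℝ :=
  sInf {c | ∃ A : Finset (Fin m), (A \ B).card = mm ∧ c = rayleighMin M A}

/-- Sparse maximal eigenvalue `φ_max(m, B; M)`. -/
def phiMax {m : ℕ} (mm : ℕ) (B : Finset (Fin m)) (M : Matrix (Fin m) (Fin m) ℝ) : ℝ :=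
  sSup {c | ∃ A : Finset (Fin m), (A \ B).card = mm ∧ c = rayleighMax M A}

/-- Sparse condition number `φ_cond(m; B, M)`. -/
def phiCond {m : ℕ} (mm : ℕ) (B : Finset (Fin m)) (M : Matrix (Fin m) (Fin m) ℝ) : ℝ :=
  sSup {c | ∃ A : Finset (Fin m), (A \ B).card ≤ max 1 mm ∧ c = rayleighMax M A / rayleighMin M A}

/-- Operator (spectral) norm of a square matrix. -/
def opNormM {m : ℕ} (M : Matrix (Fin m) (Fin m) ℝ) : ℝ :=
  sSup {c | ∃ v : Fin m → ℝ, l2 v = 1 ∧ c = l2 (M.mulVec v)}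

/-- Operator norm of a rectangular matrix given as a function. -/
def opNormF {n p : ℕ} (M : Fin n → Fin p → ℝ) : ℝ :=
  sSup {c | ∃ v : Fin p → ℝ, l2 v = 1 ∧ c = l2 (mulVec' M v)}

section Prob

variable {Ω : Type*} [MeasureSpace Ω]

/-- `W n = O_P(a n)`. -/
def BigOP (W : ℕ → Ω → ℝ) (a : ℕ → ℝ) : Prop :=
  ∀ γ : ℝ, 0 < γ → ∃ K : ℝ, ∃ N : ℕ, ∀ n, N ≤ n →
    (volume {ω | K * a n < |W n ω|}).toReal ≤ γ

/-- `W n = o_P(1)`. -/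
def LittleOP (W : ℕ → Ω → ℝ) : Prop :=
  ∀ δ : ℝ, 0 < δ → Tendsto (fun n => (volume {ω | δ < |W n ω|}).toReal) atTop (nhds 0)

/-- `W n` is stochastically unbounded. -/
def StochUnbounded (W : ℕ → Ω → ℝ) : Prop :=
  ¬ ∀ γ : ℝ, 0 < γ → ∃ M : ℝ,
      Filter.limsup (fun n => (volume {ω | M < |W n ω|}).toReal) atTop ≤ γ

/-- Convergence in distribution to the standard normal law (via CDFs). -/
def TendstoNormal (Z : ℕ → Ω → ℝ) : Prop :=
  ∀ t : ℝ, Tendsto (fun n => (volume {ω | Z n ω ≤ t}).toReal) atTop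
    (nhds ((gaussianReal 0 1 (Set.Iic t)).toReal))

/-- `e : Ω → ℝⁿ` is a centered Gaussian vector with covariance `v · I_n`. -/
def IsoGaussVec (nn : ℕ) (v : ℝ) (e : Ω → Fin nn → ℝ) : Prop :=
  Measurable e ∧
    Measure.map e volume = Measure.pi (fun _ : Fin nn => gaussianReal 0 (Real.toNNReal v))

/-- Gaussian noise `N(0, σ² I_n)`. -/
def GaussNoise (nn : ℕ) (σ : ℝ) (e : Ω → Fin nn → ℝ) : Prop := IsoGaussVec nn (σ ^ 2) e

/-- Design matrix with i.i.d. `N(0, Sig)` rows. -/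
def GaussDesign (nn pp : ℕ) (Sig : Matrix (Fin pp) (Fin pp) ℝ)
    (X : Ω → Fin nn → Fin pp → ℝ) : Prop :=
  Measurable X ∧ ∃ A : Matrix (Fin pp) (Fin pp) ℝ, A.transpose * A = Sig ∧
    Measure.map X volume =
      Measure.map (fun (G : Fin nn → Fin pp → ℝ) (i : Fin nn) (j : Fin pp) => ∑ l, G i l * A l j)
        (Measure.pi fun _ : Fin nn => Measure.pi fun _ : Fin pp => gaussianReal 0 1)

end Prob

/-- `⟨a₀, Σ⁻¹ a₀⟩`. -/
def quadA0 {p : ℕ} (Sig : Matrix (Fin p) (Fin p) ℝ) (a0 : Fin p → ℝ) : ℝ :=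
  dot a0 (Matrix.mulVec Sig⁻¹ a0)

/-- `C₀ = ‖Σ^{-1/2} a₀‖₂`. -/
def C0 {p : ℕ} (Sig : Matrix (Fin p) (Fin p) ℝ) (a0 : Fin p → ℝ) : ℝ :=
  Real.sqrt (quadA0 Sig a0)

/-- Fisher information `F_θ = 1/(σ² ⟨a₀, Σ⁻¹ a₀⟩)`. -/
def Fisher {p : ℕ} (σ : ℝ) (Sig : Matrix (Fin p) (Fin p) ℝ) (a0 : Fin p → ℝ) : ℝ :=
  1 / (σ ^ 2 * quadA0 Sig a0)

/-- Least favorable direction `u₀ = Σ⁻¹a₀/⟨a₀,Σ⁻¹a₀⟩`. -/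
def u0vec {p : ℕ} (Sig : Matrix (Fin p) (Fin p) ℝ) (a0 : Fin p → ℝ) : Fin p → ℝ :=
  fun j => Matrix.mulVec Sig⁻¹ a0 j / quadA0 Sig a0

/-- Ideal score vector `z₀ = X u₀`. -/
def z0vec {n p : ℕ} (X : Fin n → Fin p → ℝ) (Sig : Matrix (Fin p) (Fin p) ℝ)
    (a0 : Fin p → ℝ) : Fin n → ℝ := mulVec' X (u0vec Sig a0)

/-- Residual vector `y - X bhat` where `y = Xβ + ε`. -/
def residOf {n p : ℕ} (X : Fin n → Fin p → ℝ) (e : Fin n → ℝ) (β bhat : Fin p → ℝ) :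
    Fin n → ℝ := fun i => mulVec' X β i + e i - mulVec' X bhat i

/-- Degrees-of-freedom adjusted LDPE. -/
def thetaHat {p : ℕ} (nn : ℕ) (a0 bhat : Fin p → ℝ) (z0 r : Fin nn → ℝ) (ν : ℝ) : ℝ :=
  dot a0 bhat + dot z0 r / ((l2 z0) ^ 2 * (1 - ν / nn))

/-- De-biased estimate based on an estimated score vector `zhat`. -/
def thetaHatZ {p : ℕ} (nn : ℕ) (a0 bhat : Fin p → ℝ) (zhat z r : Fin nn → ℝ) (ν : ℝ) : ℝ :=
  dot a0 bhat + dot zhat r / ((1 - ν / nn) * dot zhat z)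

/-- `T_n = √(n F_θ) ⟨z₀, ε⟩ / ‖z₀‖₂²`. -/
def Tstat (nn : ℕ) (F : ℝ) (z0 e : Fin nn → ℝ) : ℝ :=
  Real.sqrt (nn * F) * dot z0 e / (l2 z0) ^ 2

/-- `√(n F_θ)(1 - ν/n)(θ̂_ν - θ)`. -/
def pivot {p : ℕ} (n : ℕ) (σ : ℝ) (Sig : Matrix (Fin p) (Fin p) ℝ) (a0 β bhat : Fin p → ℝ)
    (Xω : Fin n → Fin p → ℝ) (eω : Fin n → ℝ) (ν : ℝ) : ℝ :=
  Real.sqrt ((n : ℝ) * Fisher σ Sig a0) * (1 - ν / n) *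
    (thetaHat n a0 bhat (z0vec Xω Sig a0) (residOf Xω eω β bhat) ν - dot a0 β)

/-- The statistic `T_n` of the model. -/
def TofModel {p : ℕ} (n : ℕ) (σ : ℝ) (Sig : Matrix (Fin p) (Fin p) ℝ) (a0 : Fin p → ℝ)
    (Xω : Fin n → Fin p → ℝ) (eω : Fin n → ℝ) : ℝ :=
  Tstat n (Fisher σ Sig a0) (z0vec Xω Sig a0) eω

/-- `λ₀ = √((2/n) log(8p/k))`. -/
def lam0 (nn pp kk : ℕ) : ℝ := Real.sqrt ((2 / (nn : ℝ)) * Real.log (8 * (pp : ℝ) / kk))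

/-- `λ_univ = √((2/n) log p)`. -/
def lamUniv (nn pp : ℕ) : ℝ := Real.sqrt ((2 / (nn : ℝ)) * Real.log (pp : ℝ))

def tauStar (e1 e2 : ℝ) : ℝ := (1 - e1 - e2) ^ 2
def tauUp (e1 e2 : ℝ) : ℝ := (1 + e1 + e2) ^ 2

/-- Projection of `v` onto the span of `e`. -/
def projOn {n : ℕ} (e v : Fin n → ℝ) : Fin n → ℝ := fun i => (dot e v / (l2 e) ^ 2) * e i

/-- Projection of `v` onto the orthogonal complement of `e`. -/
def projPerp {n : ℕ} (e v : Fin n → ℝ) : Fin n → ℝ := fun i => v i - projOn e v i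

/-- The interpolation path `z₀(t)`. -/
def z0Path {n : ℕ} (e z0 g : Fin n → ℝ) (t : ℝ) : Fin n → ℝ :=
  fun i => projOn e z0 i + Real.cos t * projPerp e z0 i + Real.sin t * projPerp e g i

/-- `ż₀(t)`. -/
def zdotPath {n : ℕ} (e z0 g : Fin n → ℝ) (t : ℝ) : Fin n → ℝ :=
  fun i => -Real.sin t * projPerp e z0 i + Real.cos t * projPerp e g i

/-- The interpolated design `X(t) = XQ₀ + z₀(t)a₀ᵀ`. -/
def XPath {n p : ℕ} (X : Fin n → Fin p → ℝ) (Sig : Matrix (Fin p) (Fin p) ℝ) (a0 : Fin p → ℝ)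
    (e g : Fin n → ℝ) (t : ℝ) : Fin n → Fin p → ℝ :=
  fun i j => (X i j - z0vec X Sig a0 i * a0 j) + z0Path e (z0vec X Sig a0) g t i * a0 j

/-- Assumption M. -/
structure AssumptionM (nn pp mm kk : ℕ) (ρs η2 η3 e1 e2 e3 e4 σ lam : ℝ)
    (Sig : Matrix (Fin pp) (Fin pp) ℝ) (S : Finset (Fin pp)) : Prop where
  hn : 0 < nn
  hp : 0 < pp
  hm : 0 < mm
  hk : 0 < kk
  hρ : 0 < ρs
  hη2 : η2 ∈ Set.Ioo (0 : ℝ) 1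
  hη3 : η3 ∈ Set.Ioo (0 : ℝ) 1
  he1 : 0 < e1
  he2 : 0 < e2
  he3 : 0 < e3
  he4 : 0 < e4
  hσ : 0 < σ
  hdiag : ∀ j, Sig j j ≤ 1
  hlam : lam = η2⁻¹ * (1 + η3) * σ * lam0 nn pp kk
  hSRC : ((S.card : ℝ) + kk) <
      (1 - η2) ^ 2 * (2 * mm) /
        ((1 + η2) ^ 2 * ((tauUp e1 e2 / tauStar e1 e2) * phiCond (mm + kk) S Sig - 1))
  hphimin : ρs ≤ phiMin (mm + kk) S Sig
  hlam0s : lam0 nn pp kk * Real.sqrt ((S.card : ℝ) + mm + kk) ≤ 1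
  hrank : 2 * (mm + kk) + S.card + 1 ≤ min (nn - 1) (pp + 1)
  he12 : e1 + e2 < 1
  he34 : e3 + e4 = e2 ^ 2 / 8
  hsize1 : S.card + mm + kk + 1 ≤ pp + 1
  hsize2 : ((S.card + mm + kk + 1 : ℕ) : ℝ) ≤ e1 ^ 2 * nn / 2
  hbinom : Real.log (Nat.choose (pp - S.card) (mm + kk)) ≤ e3 * nn

/-- The unknown-Σ construction: `u = e_{j₀}/(a₀)_{j₀}`. -/
def uvecOf {p : ℕ} (a0 : Fin p → ℝ) (j0 : Fin p) : Fin p → ℝ :=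
  fun j => if j = j0 then (a0 j0)⁻¹ else 0

/-- `Qb = b - u ⟨a₀, b⟩` where `Q = I - u a₀ᵀ`. -/
def Qvec {p : ℕ} (a0 : Fin p → ℝ) (j0 : Fin p) (b : Fin p → ℝ) : Fin p → ℝ :=
  fun j => b j - uvecOf a0 j0 j * dot a0 b

/-- `XQ`. -/
def XQmat {n p : ℕ} (X : Fin n → Fin p → ℝ) (a0 : Fin p → ℝ) (j0 : Fin p) :
    Fin n → Fin p → ℝ :=
  fun i j => X i j - mulVec' X (uvecOf a0 j0) i * a0 j

/-- `z = Xu`. -/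
def zOf {n p : ℕ} (X : Fin n → Fin p → ℝ) (a0 : Fin p → ℝ) (j0 : Fin p) : Fin n → ℝ :=
  mulVec' X (uvecOf a0 j0)

/-- `γ = -Q u₀`. -/
def gammaOf {p : ℕ} (Sig : Matrix (Fin p) (Fin p) ℝ) (a0 : Fin p → ℝ) (j0 : Fin p) :
    Fin p → ℝ :=
  fun j => -(Qvec a0 j0 (u0vec Sig a0) j)

/-- Estimated score vector `ẑ = z - XQ γ̂`. -/
def zhatOf {n p : ℕ} (X : Fin n → Fin p → ℝ) (a0 : Fin p → ℝ) (j0 : Fin p)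
    (ghat : Fin p → ℝ) : Fin n → ℝ :=
  fun i => zOf X a0 j0 i - mulVec' (XQmat X a0 j0) ghat i

section Events

variable {Ω : Type*}

/-- The event `Ω₁`. -/
def OmegaOne {n p : ℕ} (X : Ω → Fin n → Fin p → ℝ) (Sig : Matrix (Fin p) (Fin p) ℝ)
    (a0 : Fin p → ℝ) (eps g : Ω → Fin n → ℝ) (bpath : ℝ → Ω → Fin p → ℝ) : Set Ω :=
  {ω | ∃ c : ℝ, 0 < c ∧ ∀ t, 0 ≤ t → ∀ t', 0 ≤ t' →
      c ≤ rayleighMin ((n : ℝ)⁻¹ • gramOf (XPath (X ω) Sig a0 (eps ω) (g ω) t))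
            (suppF (bpath t ω) ∪ suppF (bpath t' ω))}

/-- The event `Ω₂`. -/
def OmegaTwo {n p : ℕ} (X : Ω → Fin n → Fin p → ℝ) (Sig : Matrix (Fin p) (Fin p) ℝ)
    (a0 β : Fin p → ℝ) (eps g : Ω → Fin n → ℝ) (bpath bnl : ℝ → Ω → Fin p → ℝ)
    (σ lam0v M1 M2 M3 M4 M5 : ℝ) (sstar s0k : ℕ) : Set Ω :=
  {ω | ∀ t, 0 ≤ t →
      l2 (mulVec' (XPath (X ω) Sig a0 (eps ω) (g ω) t) (fun j => bpath t ω j - β j))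
          ≤ M1 * Real.sqrt ((n : ℝ) * sstar) * σ * lam0v ∧
      l2 (mulVec' (XPath (X ω) Sig a0 (eps ω) (g ω) t) (fun j => bnl t ω j - β j))
          ≤ M1 * Real.sqrt ((n : ℝ) * sstar) * σ * lam0v ∧
      Real.sqrt (quadForm Sig (fun j => bpath t ω j - β j))
          ≤ M2 * Real.sqrt (sstar : ℝ) * σ * lam0v ∧
      ((suppF (bpath t ω)).card ≤ sstar ∧ (sstar : ℝ) ≤ M3 * s0k) ∧
      (∀ w : Fin p → ℝ,
        subBilinInv ((n : ℝ)⁻¹ • gramOf (XPath (X ω) Sig a0 (eps ω) (g ω) t))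
            (suppF (bpath t ω)) w w
          ≤ M4 * subBilinInv Sig (suppF (bpath t ω)) w w) ∧
      max (max (l2 (eps ω) / σ)
            (C0 Sig a0 * l2 (z0Path (eps ω) (z0vec (X ω) Sig a0) (g ω) t)))
          ((n : ℝ) / (C0 Sig a0 * l2 (z0Path (eps ω) (z0vec (X ω) Sig a0) (g ω) t)))
        ≤ M5 * Real.sqrt (n : ℝ)}

/-- `Rem_I`. -/
def RemI {n p : ℕ} (σ : ℝ) (Sig : Matrix (Fin p) (Fin p) ℝ) (a0 β : Fin p → ℝ)
    (X : Ω → Fin n → Fin p → ℝ) (eps : Ω → Fin n → ℝ) (bpath : ℝ → Ω → Fin p → ℝ) (ω : Ω) :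
    ℝ :=
  pivot n σ Sig a0 β (bpath 0 ω) (X ω) (eps ω) 0 - TofModel n σ Sig a0 (X ω) (eps ω)
    - Real.sqrt (Fisher σ Sig a0 / n) *
        ∫ t in (0 : ℝ)..(Real.pi / 2),
          Real.sin t * ((suppF (bpath t ω)).card : ℝ) * dot a0 (fun j => bpath t ω j - β j)

/-- `Rem_II`. -/
def RemII {n p : ℕ} (σ : ℝ) (Sig : Matrix (Fin p) (Fin p) ℝ) (a0 β : Fin p → ℝ)
    (X : Ω → Fin n → Fin p → ℝ) (eps : Ω → Fin n → ℝ) (bpath : ℝ → Ω → Fin p → ℝ) (ω : Ω) :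
    ℝ :=
  pivot n σ Sig a0 β (bpath 0 ω) (X ω) (eps ω) 0 - TofModel n σ Sig a0 (X ω) (eps ω)
    - Real.sqrt (Fisher σ Sig a0 / n) * dot a0 (fun j => bpath 0 ω j - β j) *
        ∫ t in (0 : ℝ)..(Real.pi / 2), Real.sin t * ((suppF (bpath t ω)).card : ℝ)

end Events

/-- The matrix `D(t)` from the gradient formula of the Lasso path. -/
def DmatOf {n p : ℕ} (Xt : Fin n → Fin p → ℝ) (a0 β : Fin p → ℝ) (e : Fin n → ℝ)
    (bt : Fin p → ℝ) : Fin n → Fin p → ℝ :=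
  fun i j =>
    if hj : j ∈ suppF bt then
      ∑ b : {x // x ∈ suppF bt},
        (subMat (gramOf Xt) (suppF bt))⁻¹ ⟨j, hj⟩ b *
          (a0 b.1 * (e i - mulVec' Xt (fun j' => bt j' - β j') i)
            - Xt i b.1 * dot a0 (fun j' => bt j' - β j'))
    else 0

/-- The set `U₀(S̄, Σ̄, η₁, η₂)`. -/
def U0set {p : ℕ} (S : Finset (Fin p)) (Sig : Matrix (Fin p) (Fin p) ℝ) (η1 η2 : ℝ) :
    Set (Fin p → ℝ) :=
  {u | (∀ j ∉ S, abs (u j * Matrix.mulVec Sig u j + |u j|) ≤ η2 * |u j|) ∧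
    Real.sqrt (∑ j ∈ S, (Matrix.mulVec Sig u j) ^ 2) ≤ (1 + η1) * Real.sqrt (S.card : ℝ)}

/-- The Rademacher (symmetric random sign) law on ℝ. -/
def radLaw : Measure ℝ := (2 : ℝ≥0∞)⁻¹ • Measure.dirac 1 + (2 : ℝ≥0∞)⁻¹ • Measure.dirac (-1)

/-- A mean-zero, unit-variance law on ℝ with subgaussian norm at most `K`. -/
def SubgLaw (μ : Measure ℝ) (K : ℝ) : Prop :=
  IsProbabilityMeasure μ ∧ (∫ x, x ∂μ) = 0 ∧ (∫ x, x ^ 2 ∂μ) = 1 ∧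
    (∫ x, Real.exp (x ^ 2 / K ^ 2) ∂μ) ≤ 2

/-- `h` is a norm on `ℝᵖ`. -/
def IsNorm {p : ℕ} (h : (Fin p → ℝ) → ℝ) : Prop :=
  (∀ b, h b = 0 ↔ b = 0) ∧ (∀ (c : ℝ) (b : Fin p → ℝ), h (c • b) = |c| * h b) ∧
    ∀ a b : Fin p → ℝ, h (a + b) ≤ h a + h b

end BZ

namespace BZ

lemma l2_nonneg {m : ℕ} (v : Fin m → ℝ) : 0 ≤ l2 v := Real.sqrt_nonneg _

lemma l2_sq {m : ℕ} (v : Fin m → ℝ) : l2 v ^ 2 = ∑ i, v i ^ 2 :=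
  Real.sq_sqrt (Finset.sum_nonneg fun i _ => sq_nonneg (v i))

lemma l2_smul {m : ℕ} (c : ℝ) (v : Fin m → ℝ) : l2 (c • v) = |c| * l2 v := by
  simp only [l2, Pi.smul_apply, smul_eq_mul, mul_pow, ← Finset.mul_sum]
  rw [Real.sqrt_mul (sq_nonneg c), Real.sqrt_sq_eq_abs]

lemma l2_eq_norm {m : ℕ} (v : Fin m → ℝ) : l2 v = ‖WithLp.toLp 2 v‖ := by
  simp [l2, EuclideanSpace.norm_eq]

lemma abs_dot_le {m : ℕ} (a b : Fin m → ℝ) : |dot a b| ≤ l2 a * l2 b := by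
  rw [dot, ← Real.sqrt_sq_eq_abs, l2, l2, ← Real.sqrt_mul (Finset.sum_nonneg fun i _ => sq_nonneg _)]
  exact Real.sqrt_le_sqrt (Finset.sum_mul_sq_le_sq_mul_sq _ _ _)

lemma mulVec'_add {n p : ℕ} (X : Fin n → Fin p → ℝ) (a b : Fin p → ℝ) :
    mulVec' X (a + b) = mulVec' X a + mulVec' X b := by
  ext i; simp [mulVec', mul_add, Finset.sum_add_distrib]

lemma mulVec'_smul {n p : ℕ} (X : Fin n → Fin p → ℝ) (c : ℝ) (b : Fin p → ℝ) :
    mulVec' X (c • b) = c • mulVec' X b := by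
  ext i; simp only [mulVec', Pi.smul_apply, smul_eq_mul, Finset.mul_sum]
  exact Finset.sum_congr rfl fun j _ => by ring

lemma mulVec'_sub {n p : ℕ} (X : Fin n → Fin p → ℝ) (a b : Fin p → ℝ) :
    mulVec' X (a - b) = mulVec' X a - mulVec' X b := by
  ext i; simp [mulVec', mul_sub, Finset.sum_sub_distrib]

lemma sub_mulVec' {n p : ℕ} (X Y : Fin n → Fin p → ℝ) (a : Fin p → ℝ) :
    mulVec' (X - Y) a = mulVec' X a - mulVec' Y a := by
  ext i; simp [mulVec', sub_mul, Finset.sum_sub_distrib]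

/-- Frobenius norm of a matrix; it dominates the operator norm. -/
def frob {n p : ℕ} (X : Fin n → Fin p → ℝ) : ℝ := Real.sqrt (∑ i, ∑ j, X i j ^ 2)

lemma continuous_frob {n p : ℕ} : Continuous (frob : (Fin n → Fin p → ℝ) → ℝ) := by
  unfold frob; fun_prop

lemma l2_mulVec'_le_frob {n p : ℕ} (X : Fin n → Fin p → ℝ) (v : Fin p → ℝ) :
    l2 (mulVec' X v) ≤ frob X * l2 v := by
  rw [frob, l2, l2,
    ← Real.sqrt_mul (Finset.sum_nonneg fun i _ => Finset.sum_nonneg fun j _ => sq_nonneg _)]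
  apply Real.sqrt_le_sqrt
  rw [Finset.sum_mul]
  exact Finset.sum_le_sum fun i _ => Finset.sum_mul_sq_le_sq_mul_sq _ _ _

lemma opNormF_nonneg {n p : ℕ} (X : Fin n → Fin p → ℝ) : 0 ≤ opNormF X := by
  apply Real.sSup_nonneg
  rintro c ⟨v, -, rfl⟩
  exact l2_nonneg _

lemma l2_mulVec'_le_opNormF {n p : ℕ} (X : Fin n → Fin p → ℝ) (v : Fin p → ℝ) :
    l2 (mulVec' X v) ≤ opNormF X * l2 v := by
  rcases (l2_nonneg v).eq_or_lt with h0 | h0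
  · simpa [← h0] using l2_mulVec'_le_frob X v
  · have hb : BddAbove {c | ∃ v : Fin p → ℝ, l2 v = 1 ∧ c = l2 (mulVec' X v)} := by
      refine ⟨frob X, ?_⟩
      rintro c ⟨w, hw, rfl⟩
      simpa [hw] using l2_mulVec'_le_frob X w
    have h1 : l2 (mulVec' X ((l2 v)⁻¹ • v)) ≤ opNormF X := by
      refine le_csSup hb ⟨_, ?_, rfl⟩
      rw [l2_smul, abs_of_pos (inv_pos.2 h0), inv_mul_cancel₀ h0.ne']
    rw [mulVec'_smul, l2_smul, abs_of_pos (inv_pos.2 h0), inv_mul_le_iff₀ h0] at h1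
    linarith

lemma IsNorm.nonneg {p : ℕ} {h : (Fin p → ℝ) → ℝ} (hn : IsNorm h) (b : Fin p → ℝ) : 0 ≤ h b := by
  have h1 := hn.2.2 b ((-1 : ℝ) • b)
  have h2 := hn.2.1 (-1) b
  have h3 : b + (-1 : ℝ) • b = 0 := by simp
  rw [h3, (hn.1 0).2 rfl, h2] at h1
  norm_num at h1
  exact h1

lemma IsNorm.convexOn {p : ℕ} {h : (Fin p → ℝ) → ℝ} (hn : IsNorm h) :
    ConvexOn ℝ Set.univ h := by
  refine ⟨convex_univ, fun x _ y _ a b ha hb _ => ?_⟩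
  have := hn.2.2 (a • x) (b • y)
  rwa [hn.2.1, hn.2.1, abs_of_nonneg ha, abs_of_nonneg hb] at this

/-- Equivalence of norms on `ℝᵖ`, by minimizing `h` over the Euclidean unit sphere. -/
lemma IsNorm.exists_l2_le {p : ℕ} {h : (Fin p → ℝ) → ℝ} (hn : IsNorm h) :
    ∃ c : ℝ, 0 ≤ c ∧ ∀ b, l2 b ≤ c * h b := by
  have hcont : Continuous h :=
    continuousOn_univ.1 (hn.convexOn.continuousOn isOpen_univ)
  have hcont' : Continuous fun x : EuclideanSpace ℝ (Fin p) => h x.ofLp := by fun_prop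
  rcases (Metric.sphere (0 : EuclideanSpace ℝ (Fin p)) 1).eq_empty_or_nonempty with he | hne
  · refine ⟨0, le_rfl, fun b => ?_⟩
    by_contra hlt
    rw [zero_mul, not_le] at hlt
    have : WithLp.toLp 2 ((l2 b)⁻¹ • b) ∈ Metric.sphere (0 : EuclideanSpace ℝ (Fin p)) 1 := by
      rw [mem_sphere_zero_iff_norm, ← l2_eq_norm, l2_smul, abs_of_pos (inv_pos.2 hlt),
        inv_mul_cancel₀ hlt.ne']
    simp [he] at this
  · obtain ⟨x, hx, hmin⟩ := (isCompact_sphere (0 : EuclideanSpace ℝ (Fin p)) 1).exists_isMinOn hne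
      hcont'.continuousOn
    have hpos : 0 < h x.ofLp := by
      refine lt_of_le_of_ne (hn.nonneg _) fun h0 => ?_
      have hx0 : x = 0 := by
        have := (hn.1 _).1 h0.symm
        ext i; simp [this]
      simp [hx0] at hx
    refine ⟨(h x.ofLp)⁻¹, (inv_pos.2 hpos).le, fun b => ?_⟩
    rw [inv_mul_eq_div, le_div_iff₀ hpos]
    rcases (l2_nonneg b).eq_or_lt with h0 | h0
    · rw [← h0, zero_mul]; exact hn.nonneg b
    · have hs : WithLp.toLp 2 ((l2 b)⁻¹ • b) ∈ Metric.sphere (0 : EuclideanSpace ℝ (Fin p)) 1 := by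
        rw [mem_sphere_zero_iff_norm, ← l2_eq_norm, l2_smul, abs_of_pos (inv_pos.2 h0),
          inv_mul_cancel₀ h0.ne']
      have h1 : h x.ofLp ≤ h ((l2 b)⁻¹ • b) := hmin hs
      rw [hn.2.1, abs_of_pos (inv_pos.2 h0), inv_mul_eq_div, le_div_iff₀ h0] at h1
      linarith

/-- Quadratic growth at a minimizer: comparing `b₀` with `(1 - s) b₀ + s b₁` and letting `s → 0`
shows that the least-squares term contributes the full excess `‖X(b₀ - b₁)‖₂² / (2n)`. -/
lemma quadratic_growth {n p : ℕ} (y : Fin n → ℝ) (X : Fin n → Fin p → ℝ)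
    {h : (Fin p → ℝ) → ℝ} (hn : IsNorm h) (b₀ b₁ : Fin p → ℝ)
    (hmin : ∀ b : Fin p → ℝ, (l2 (fun i => y i - mulVec' X b₀ i)) ^ 2 / (2 * n) + h b₀
      ≤ (l2 (fun i => y i - mulVec' X b i)) ^ 2 / (2 * n) + h b) :
    (l2 (fun i => y i - mulVec' X b₀ i)) ^ 2 / (2 * n) + h b₀
        + l2 (mulVec' X (b₀ - b₁)) ^ 2 / (2 * n)
      ≤ (l2 (fun i => y i - mulVec' X b₁ i)) ^ 2 / (2 * n) + h b₁ := by
  set A := (l2 (fun i => y i - mulVec' X b₀ i)) ^ 2 with hA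
  set B := (l2 (fun i => y i - mulVec' X b₁ i)) ^ 2 with hB
  set Q := l2 (mulVec' X (b₀ - b₁)) ^ 2 with hQ
  have key : ∀ s ∈ Set.Ioo (0 : ℝ) 1,
      A / (2 * n) + h b₀ + (1 - s) * (Q / (2 * n)) ≤ B / (2 * n) + h b₁ := by
    rintro s ⟨hs0, hs1⟩
    have h1 := hmin ((1 - s) • b₀ + s • b₁)
    have h2 : h ((1 - s) • b₀ + s • b₁) ≤ (1 - s) * h b₀ + s * h b₁ :=
      hn.convexOn.2 trivial trivial (by linarith) hs0.le (by ring)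
    have h3 : (l2 (fun i => y i - mulVec' X ((1 - s) • b₀ + s • b₁) i)) ^ 2
        = (1 - s) * A + s * B - s * (1 - s) * Q := by
      rw [hA, hB, hQ, l2_sq, l2_sq, l2_sq, l2_sq, mulVec'_add, mulVec'_smul, mulVec'_smul,
        mulVec'_sub, Finset.mul_sum, Finset.mul_sum, Finset.mul_sum, ← Finset.sum_add_distrib,
        ← Finset.sum_sub_distrib]
      refine Finset.sum_congr rfl fun i _ => ?_
      simp only [Pi.add_apply, Pi.sub_apply, Pi.smul_apply, smul_eq_mul]
      ring
    rw [h3] at h1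
    have h4 : ((1 - s) * A + s * B - s * (1 - s) * Q) / (2 * n)
        = (1 - s) * (A / (2 * n)) + s * (B / (2 * n)) - s * (1 - s) * (Q / (2 * n)) := by ring
    rw [h4] at h1
    refine le_of_mul_le_mul_left ?_ hs0
    linarith
  have hlim : Tendsto (fun s : ℝ => A / (2 * n) + h b₀ + (1 - s) * (Q / (2 * n)))
      (nhdsWithin 0 (Set.Ioi 0)) (nhds (A / (2 * n) + h b₀ + (1 - 0) * (Q / (2 * n)))) :=
    (Continuous.tendsto (by fun_prop) 0).mono_left nhdsWithin_le_nhds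
  rw [sub_zero, one_mul] at hlim
  exact le_of_tendsto hlim (Filter.mem_of_superset (Ioo_mem_nhdsGT one_pos) key)

/-- The cross term left after adding the two growth inequalities, rewritten so that every summand
carries one factor `X - X̃`. -/
lemma cross_term_eq {n p : ℕ} (eps : Fin n → ℝ) (β : Fin p → ℝ) (X Xt : Fin n → Fin p → ℝ)
    (bh bt : Fin p → ℝ) :
    (l2 (fun i => eps i + mulVec' X β i - mulVec' X bt i)) ^ 2
        - (l2 (fun i => eps i + mulVec' X β i - mulVec' X bh i)) ^ 2
        + (l2 (fun i => eps i + mulVec' Xt β i - mulVec' Xt bh i)) ^ 2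
        - (l2 (fun i => eps i + mulVec' Xt β i - mulVec' Xt bt i)) ^ 2
      = 2 * dot (mulVec' (X - Xt) (bh - bt)) eps
        - dot (mulVec' (X - Xt) (bh - bt)) (mulVec' X (bh + bt + (-2 : ℝ) • β))
        - dot (mulVec' Xt (bh - bt)) (mulVec' (X - Xt) (bh + bt + (-2 : ℝ) • β)) := by
  simp only [l2_sq, dot, Finset.mul_sum, ← Finset.sum_add_distrib, ← Finset.sum_sub_distrib,
    mulVec'_add, mulVec'_sub, mulVec'_smul, sub_mulVec']
  refine Finset.sum_congr rfl fun i _ => ?_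
  simp only [Pi.add_apply, Pi.sub_apply, Pi.smul_apply, smul_eq_mul]
  ring

/-- Lipschitzness of regularized least-squares with respect to the design.
For any compact convex set `K̃` of designs and any norm `h`, there is a constant
`C(K̃, h, ε, β)` such that for designs `X, X̃ ∈ K̃` and any corresponding minimizers
`β̂, β̃`, one has `‖X(β̂−β̃)‖₂² + ‖X̃(β̂−β̃)‖₂² ≤ C ‖X−X̃‖_op ‖β̂−β̃‖₂`. -/
theorem statement_13 (n p : ℕ) (eps : Fin n → ℝ) (β : Fin p → ℝ)
    (K : Set (Fin n → Fin p → ℝ)) (hKc : IsCompact K) (hKconv : Convex ℝ K)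
    (h : (Fin p → ℝ) → ℝ) (hnorm : IsNorm h) :
    ∃ C : ℝ, ∀ X ∈ K, ∀ Xt ∈ K, ∀ bh bt : Fin p → ℝ,
      (∀ b : Fin p → ℝ,
        (l2 (fun i => eps i + mulVec' X β i - mulVec' X bh i)) ^ 2 / (2 * n) + h bh
          ≤ (l2 (fun i => eps i + mulVec' X β i - mulVec' X b i)) ^ 2 / (2 * n) + h b) →
      (∀ b : Fin p → ℝ,
        (l2 (fun i => eps i + mulVec' Xt β i - mulVec' Xt bt i)) ^ 2 / (2 * n) + h bt
          ≤ (l2 (fun i => eps i + mulVec' Xt β i - mulVec' Xt b i)) ^ 2 / (2 * n) + h b) →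
      (l2 (mulVec' X (fun j => bh j - bt j))) ^ 2
          + (l2 (mulVec' Xt (fun j => bh j - bt j))) ^ 2
        ≤ C * opNormF (X - Xt) * l2 (fun j => bh j - bt j) := by
  rcases Nat.eq_zero_or_pos n with rfl | hn
  · refine ⟨0, fun X _ Xt _ bh bt _ _ => ?_⟩
    simp [l2]
  have hn' : (0 : ℝ) < 2 * n := by positivity
  obtain ⟨c, hc0, hc⟩ := hnorm.exists_l2_le
  obtain ⟨M, hM⟩ := (hKc.image continuous_frob).bddAbove
  -- `R` bounds the objective at `b = 0` uniformly over the designs in `K`.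
  obtain ⟨R, hR⟩ := (hKc.image (f := fun X : Fin n → Fin p → ℝ =>
    (l2 (fun i => eps i + mulVec' X β i - mulVec' X 0 i)) ^ 2 / (2 * n))
    (by unfold l2 mulVec'; fun_prop)).bddAbove
  have hM' : ∀ X ∈ K, ∀ v, l2 (mulVec' X v) ≤ M * l2 v := fun X hX v =>
    (l2_mulVec'_le_frob X v).trans
      (mul_le_mul_of_nonneg_right (hM ⟨X, hX, rfl⟩) (l2_nonneg v))
  have hh0 : h 0 = 0 := (hnorm.1 0).2 rfl
  have hbound : ∀ X ∈ K, ∀ b₀ : Fin p → ℝ, (∀ b : Fin p → ℝ,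
      (l2 (fun i => eps i + mulVec' X β i - mulVec' X b₀ i)) ^ 2 / (2 * n) + h b₀
        ≤ (l2 (fun i => eps i + mulVec' X β i - mulVec' X b i)) ^ 2 / (2 * n) + h b) →
      h b₀ ≤ R := by
    intro X hX b₀ hmin
    have h1 := hmin 0
    have h2 := hR ⟨X, hX, rfl⟩
    have h3 : 0 ≤ (l2 (fun i => eps i + mulVec' X β i - mulVec' X b₀ i)) ^ 2 / (2 * n) := by
      positivity
    simp only at h2
    linarith
  refine ⟨2 * l2 eps + 2 * M * (c * (2 * R + 2 * h β)), fun X hX Xt hXt bh bt hbh hbt => ?_⟩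
  change l2 (mulVec' X (bh - bt)) ^ 2 + l2 (mulVec' Xt (bh - bt)) ^ 2
    ≤ _ * opNormF (X - Xt) * l2 (bh - bt)
  have hM0 : 0 ≤ M := (Real.sqrt_nonneg _).trans (hM ⟨X, hX, rfl⟩)
  set w := bh + bt + (-2 : ℝ) • β with hw
  set d := bh - bt with hd
  set D := opNormF (X - Xt) with hD
  have hD0 : 0 ≤ D := opNormF_nonneg _
  have hwR : l2 w ≤ c * (2 * R + 2 * h β) := by
    refine (hc w).trans (mul_le_mul_of_nonneg_left ?_ hc0)
    have h1 := hnorm.2.2 (bh + bt) ((-2 : ℝ) • β)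
    have h2 := hnorm.2.2 bh bt
    have h3 : h ((-2 : ℝ) • β) = 2 * h β := by rw [hnorm.2.1]; norm_num
    linarith [hbound X hX bh hbh, hbound Xt hXt bt hbt]
  have g1 := quadratic_growth (fun i => eps i + mulVec' X β i) X hnorm bh bt hbh
  have g2 := quadratic_growth (fun i => eps i + mulVec' Xt β i) Xt hnorm bt bh hbt
  have hsymm : l2 (mulVec' Xt (bt - bh)) = l2 (mulVec' Xt d) := by
    have : bt - bh = (-1 : ℝ) • d := by rw [hd]; simp
    rw [this, mulVec'_smul, l2_smul]; simp
  rw [hsymm] at g2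
  have hsum := add_le_add g1 g2
  have hcross := cross_term_eq eps β X Xt bh bt
  rw [← hw, ← hd] at hcross
  have hle : l2 (mulVec' X d) ^ 2 + l2 (mulVec' Xt d) ^ 2
      ≤ 2 * dot (mulVec' (X - Xt) d) eps - dot (mulVec' (X - Xt) d) (mulVec' X w)
        - dot (mulVec' Xt d) (mulVec' (X - Xt) w) := by
    rw [← hcross, ← div_le_div_iff_of_pos_right hn']
    simp only [add_div, sub_div]
    linarith
  have hDd := l2_mulVec'_le_opNormF (X - Xt) d
  have hDw := l2_mulVec'_le_opNormF (X - Xt) w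
  have d0 := l2_nonneg d
  have w0 := l2_nonneg w
  have t1 : dot (mulVec' (X - Xt) d) eps ≤ D * l2 d * l2 eps :=
    (le_abs_self _).trans ((abs_dot_le _ _).trans
      (mul_le_mul_of_nonneg_right hDd (l2_nonneg _)))
  have t2 : -dot (mulVec' (X - Xt) d) (mulVec' X w) ≤ D * l2 d * (M * l2 w) :=
    (neg_le_abs _).trans ((abs_dot_le _ _).trans
      (mul_le_mul hDd (hM' X hX w) (l2_nonneg _) (by positivity)))
  have t3 : -dot (mulVec' Xt d) (mulVec' (X - Xt) w) ≤ M * l2 d * (D * l2 w) :=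
    (neg_le_abs _).trans ((abs_dot_le _ _).trans
      (mul_le_mul (hM' Xt hXt d) hDw (l2_nonneg _) (by positivity)))
  have t4 : 2 * M * D * l2 d * l2 w ≤ 2 * M * D * l2 d * (c * (2 * R + 2 * h β)) :=
    mul_le_mul_of_nonneg_left hwR (by positivity)
  linarith

end BZ
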